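/- arXiv:1811.10492 — 2 statements merged into one kernel-verified Lean document; each statement's English description precedes it below -/
import Mathlib

section
/- Let η > 0 and t > 0, and let K_η(t,·) be the OST kernel. Then K_η(t,·) ∈ C¹(ℝ), and there exists a constant C_η > 0 depending only on η such that for all x ≠ 0, |∂_x K_η(t,x)| ≤ C_η e^{6ηt}/|x|³. -/
open MeasureTheory

noncomputable def ostSymbol (η t ξ : ℝ) : ℂ :=
  Complex.exp (Complex.I * ((ξ ^ 3 * t : ℝ) : ℂ) - ((η * t * (|ξ| ^ 3 - |ξ|) : ℝ) : ℂ))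

noncomputable def ostKernel (η t x : ℝ) : ℂ :=
  ∫ ξ : ℝ, Complex.exp (2 * Real.pi * Complex.I * ((x * ξ : ℝ) : ℂ)) * ostSymbol η t ξ

open Filter Topology Set

/-- A linear function is dominated by a positive multiple of the cube, up to a constant. -/
lemma exists_linear_le_cube (A : ℝ) {η : ℝ} (hη : 0 < η) :
    ∃ B : ℝ, ∀ u : ℝ, 0 ≤ u → A * u ≤ η * u ^ 3 + B := by
  set R : ℝ := 1 + |A| / η with hR
  have hR1 : 1 ≤ R := by
    have : 0 ≤ |A| / η := by positivity
    linarith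
  refine ⟨|A| * R, fun u hu => ?_⟩
  have hA : A * u ≤ |A| * u := mul_le_mul_of_nonneg_right (le_abs_self A) hu
  rcases le_total u R with h | h
  · have h1 : |A| * u ≤ |A| * R := mul_le_mul_of_nonneg_left h (abs_nonneg A)
    have h2 : 0 ≤ η * u ^ 3 := by positivity
    linarith
  · have h1 : |A| ≤ η * u := by
      have : |A| / η ≤ u := by linarith
      rwa [div_le_iff₀ hη, mul_comm] at this
    have h2 : |A| * u ≤ η * u * u := mul_le_mul_of_nonneg_right h1 hu
    have h3 : η * u * u ≤ η * u ^ 3 := by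
      have : u ^ 2 ≤ u ^ 3 := pow_le_pow_right₀ (by linarith) (by norm_num)
      nlinarith
    have h4 : 0 ≤ |A| * R := by positivity
    linarith

lemma pow_le_factorial_mul_exp {x : ℝ} (hx : 0 ≤ x) (n : ℕ) :
    x ^ n ≤ n.factorial * Real.exp x := by
  have h := Real.pow_div_factorial_le_exp (hx := hx) (n := n)
  rwa [div_le_iff₀ (by positivity), mul_comm] at h

lemma exists_pow_mul_exp_cubic_le (n : ℕ) {q : ℝ} (hq : 0 < q) :
    ∃ C : ℝ, 0 ≤ C ∧ ∀ x : ℝ, 0 ≤ x →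
      x ^ n * Real.exp (q * x - q * x ^ 3) ≤ C * Real.exp (-x) := by
  obtain ⟨B, hB⟩ := exists_linear_le_cube (q + 2) hq
  refine ⟨n.factorial * Real.exp B, by positivity, fun x hx => ?_⟩
  calc x ^ n * Real.exp (q * x - q * x ^ 3)
      ≤ (n.factorial * Real.exp x) * Real.exp (q * x - q * x ^ 3) := by
        gcongr
        exact pow_le_factorial_mul_exp hx n
    _ = n.factorial * Real.exp (x + (q * x - q * x ^ 3)) := by rw [mul_assoc, Real.exp_add]
    _ ≤ n.factorial * Real.exp (B + -x) := by
        refine mul_le_mul_of_nonneg_left (Real.exp_le_exp.2 ?_) (by positivity)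
        linarith [hB x hx]
    _ = n.factorial * Real.exp B * Real.exp (-x) := by rw [Real.exp_add, mul_assoc]

/-- The exponential `exp (c * x + p * x ^ 3 + q * x)` of a cubic phase. -/
noncomputable def cubicExp (c p : ℂ) (q x : ℝ) : ℂ :=
  Complex.exp (c * x + p * x ^ 3 + q * x)

lemma continuous_cubicExp (c p : ℂ) (q : ℝ) : Continuous (cubicExp c p q) := by
  unfold cubicExp
  fun_prop

lemma norm_cubicExp {c p : ℂ} {q : ℝ} (hc : c.re = 0) (hp : p.re = -q) (x : ℝ) :
    ‖cubicExp c p q x‖ = Real.exp (q * x - q * x ^ 3) := by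
  rw [cubicExp, Complex.norm_exp]
  congr 1
  rw [← Complex.ofReal_pow]
  simp only [Complex.add_re, Complex.re_mul_ofReal, Complex.ofReal_re, hc, hp]
  ring

lemma hasDerivAt_cubicExp (c p : ℂ) (q x : ℝ) :
    HasDerivAt (cubicExp c p q)
      ((c + 3 * p * x ^ 2 + q) * cubicExp c p q x) x := by
  have hx : HasDerivAt (fun y : ℝ => (y : ℂ)) 1 x := Complex.ofRealCLM.hasDerivAt
  have h := (((hx.const_mul c).add ((hx.pow 3).const_mul p)).add (hx.const_mul (q : ℂ))).cexp
  refine h.congr_deriv ?_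
  simp only [cubicExp, Pi.add_apply, Pi.pow_apply]
  push_cast
  ring

lemma tendsto_pow_mul_cubicExp {c p : ℂ} {q : ℝ} (hq : 0 < q) (hc : c.re = 0) (hp : p.re = -q)
    (n : ℕ) : Tendsto (fun x : ℝ => (x : ℂ) ^ n * cubicExp c p q x) atTop (𝓝 0) := by
  obtain ⟨C, -, hC⟩ := exists_pow_mul_exp_cubic_le n hq
  have h0 : Tendsto (fun x : ℝ => C * Real.exp (-x)) atTop (𝓝 0) := by
    simpa using (Real.tendsto_exp_neg_atTop_nhds_zero.const_mul C)
  refine squeeze_zero_norm' ?_ h0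
  filter_upwards [eventually_ge_atTop 0] with x hx
  rw [norm_mul, norm_pow, Complex.norm_real, Real.norm_of_nonneg hx, norm_cubicExp hc hp]
  exact hC x hx

lemma integrableOn_pow_mul_cubicExp {c p : ℂ} {q : ℝ} (hq : 0 < q) (hc : c.re = 0)
    (hp : p.re = -q) (n : ℕ) :
    IntegrableOn (fun x : ℝ => (x : ℂ) ^ n * cubicExp c p q x) (Ioi 0) := by
  obtain ⟨C, -, hC⟩ := exists_pow_mul_exp_cubic_le n hq
  have h0 : IntegrableOn (fun x : ℝ => C * Real.exp (-x)) (Ioi 0) := by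
    simpa [IntegrableOn] using (integrableOn_exp_mul_Ioi (a := -1) (by norm_num) 0).const_mul C
  refine Integrable.mono' h0 ?_ ?_
  · have := continuous_cubicExp c p q
    exact Continuous.aestronglyMeasurable (by fun_prop)
  · filter_upwards [ae_restrict_mem measurableSet_Ioi] with x hx
    have hx : 0 ≤ x := le_of_lt hx
    rw [norm_mul, norm_pow, Complex.norm_real, Real.norm_of_nonneg hx, norm_cubicExp hc hp]
    exact hC x hx

/-- The polynomial factor of the third derivative of `x * exp (p * x ^ 3 + q * x)`. -/
noncomputable def thirdDerivFactor (p : ℂ) (q x : ℝ) : ℂ :=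
  24 * p * x + 3 * (3 * p * x ^ 2 + q) ^ 2 + 18 * p * x ^ 2 * (3 * p * x ^ 2 + q)
    + x * (3 * p * x ^ 2 + q) ^ 3

lemma integrableOn_thirdDerivFactor_mul_cubicExp {c p : ℂ} {q : ℝ} (hq : 0 < q) (hc : c.re = 0)
    (hp : p.re = -q) :
    IntegrableOn (fun x : ℝ => thirdDerivFactor p q x * cubicExp c p q x) (Ioi 0) := by
  have I := fun (a : ℂ) n => (integrableOn_pow_mul_cubicExp hq hc hp n).const_mul a
  refine ((((((((I (3 * q ^ 2) 0).add (I (24 * p + q ^ 3) 1)).add (I (36 * p * q) 2)).add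
    (I (9 * p * q ^ 2) 3)).add (I (81 * p ^ 2) 4)).add
    (I (27 * p ^ 2 * q) 5)).add (I (27 * p ^ 3) 7))).congr ?_
  refine ae_of_all _ fun x => ?_
  simp only [thirdDerivFactor, Pi.add_apply]
  ring

/-- Threefold integration by parts on the half-line. -/
lemma integral_mul_cubicExp {c p : ℂ} {q : ℝ} (hq : 0 < q) (hc : c.re = 0) (hc0 : c ≠ 0)
    (hp : p.re = -q) :
    ∫ x in Ioi (0 : ℝ), (x : ℂ) * cubicExp c p q x =
      1 / c ^ 2 - 2 * q / c ^ 3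
        - (∫ x in Ioi (0 : ℝ), thirdDerivFactor p q x * cubicExp c p q x) / c ^ 3 := by
  let P : ℝ → ℂ := fun x => x / c - (1 + x * (3 * p * x ^ 2 + q)) / c ^ 2
    + (2 * (3 * p * x ^ 2 + q) + 6 * p * x ^ 2 + x * (3 * p * x ^ 2 + q) ^ 2) / c ^ 3
  have hI1 : IntegrableOn (fun x : ℝ => (x : ℂ) * cubicExp c p q x) (Ioi 0) := by
    simpa using integrableOn_pow_mul_cubicExp hq hc hp 1
  have hI3 := integrableOn_thirdDerivFactor_mul_cubicExp hq hc hp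
  have hderiv : ∀ x ∈ Ici (0 : ℝ), HasDerivAt (fun x => P x * cubicExp c p q x)
      ((x : ℂ) * cubicExp c p q x + thirdDerivFactor p q x * cubicExp c p q x / c ^ 3) x := by
    intro x _
    have hx : HasDerivAt (fun y : ℝ => (y : ℂ)) 1 x := Complex.ofRealCLM.hasDerivAt
    have hφ := ((hx.pow 2).const_mul (3 * p)).add_const (q : ℂ)
    have h := (((hx.div_const c).sub (((hx.mul hφ).const_add 1).div_const (c ^ 2))).add
      ((((hφ.const_mul 2).add ((hx.pow 2).const_mul (6 * p))).add
        (hx.mul (hφ.pow 2))).div_const (c ^ 3))).mul (hasDerivAt_cubicExp c p q x)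
    refine h.congr_deriv ?_
    simp only [thirdDerivFactor, Pi.add_apply, Pi.sub_apply, Pi.mul_apply, Pi.pow_apply]
    push_cast
    field_simp
    ring
  have hlim : Tendsto (fun x => P x * cubicExp c p q x) atTop (𝓝 0) := by
    have T := fun (a : ℂ) n => (tendsto_pow_mul_cubicExp hq hc hp n).const_mul a
    have h := (((((T (-1 / c ^ 2 + 2 * q / c ^ 3) 0).add
      (T (1 / c - q / c ^ 2 + q ^ 2 / c ^ 3) 1)).add (T (12 * p / c ^ 3) 2)).add
      (T (-3 * p / c ^ 2 + 6 * p * q / c ^ 3) 3)).add (T (9 * p ^ 2 / c ^ 3) 5))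
    simp only [mul_zero, add_zero] at h
    refine h.congr fun x => ?_
    simp only [P]
    ring
  have h := integral_Ioi_of_hasDerivAt_of_tendsto' hderiv (hI1.add (hI3.div_const _)) hlim
  rw [integral_add hI1 (hI3.div_const _), integral_div] at h
  rw [eq_sub_iff_add_eq, h]
  simp only [P, cubicExp]
  simp
  ring

lemma norm_thirdDerivFactor_le {a : ℂ} {η M s x : ℝ} (hη : 0 < η) (hM : 1 ≤ M) (hηM : η ≤ M)
    (ha : ‖a‖ ≤ M) (hs : 0 < s) (hx : 0 ≤ x) :
    ‖thirdDerivFactor (a * (s ^ 3 : ℝ)) (η * s ^ 3) x‖ ≤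
      132 * M ^ 3 * s ^ 2 * (1 + s) ^ 6 * (1 + s * x) ^ 7 := by
  have hp : ‖a * (s ^ 3 : ℝ)‖ ≤ M * s ^ 3 := by
    rw [norm_mul, Complex.norm_real, Real.norm_of_nonneg (by positivity)]
    gcongr
  set p := a * (s ^ 3 : ℝ)
  set w : ℂ := 3 * p * x ^ 2 + (η * s ^ 3 : ℝ) with hw_def
  have hnx : ‖(x : ℂ)‖ = x := by rw [Complex.norm_real, Real.norm_of_nonneg hx]
  set u := s * x with hu
  have hu0 : 0 ≤ u := by positivity
  set W : ℝ := (1 + s) ^ 2 * (1 + u) ^ 2 with hW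
  have hUW : u ^ 2 + s ^ 2 ≤ W := by
    have h : W = u ^ 2 + s ^ 2 + (1 + 2 * s + 2 * u + 4 * s * u + 2 * s * u ^ 2 + 2 * s ^ 2 * u
        + s ^ 2 * u ^ 2) := by rw [hW]; ring
    rw [h]
    exact le_add_of_nonneg_right (by positivity)
  have hw : ‖w‖ ≤ 3 * M * s * W := by
    calc ‖w‖ ≤ ‖3 * p * x ^ 2‖ + ‖((η * s ^ 3 : ℝ) : ℂ)‖ := norm_add_le _ _
      _ = 3 * ‖p‖ * x ^ 2 + η * s ^ 3 := by
        rw [norm_mul, norm_mul, norm_pow, hnx, Complex.norm_real,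
          Real.norm_of_nonneg (by positivity)]
        simp
      _ ≤ 3 * (M * s ^ 3) * x ^ 2 + (3 * M) * s ^ 3 := by
        gcongr
        linarith
      _ = 3 * M * s * (u ^ 2 + s ^ 2) := by rw [hu]; ring
      _ ≤ _ := by gcongr
  have hsum : ‖thirdDerivFactor p (η * s ^ 3) x‖ ≤
      24 * ‖p‖ * x + 3 * ‖w‖ ^ 2 + 18 * ‖p‖ * x ^ 2 * ‖w‖ + x * ‖w‖ ^ 3 := by
    rw [thirdDerivFactor, ← hw_def]
    refine (norm_add_le _ _).trans (add_le_add ((norm_add_le _ _).trans (add_le_add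
      ((norm_add_le _ _).trans (add_le_add ?_ ?_)) ?_)) ?_) <;>
    simp [abs_of_nonneg hx]
  have key : ∀ i j : ℕ, i ≤ 6 → j ≤ 7 →
      (1 + s) ^ i * (1 + u) ^ j ≤ (1 + s) ^ 6 * (1 + u) ^ 7 := by
    intro i j hi hj
    gcongr <;> linarith
  have hM1 : M ≤ M ^ 3 := le_self_pow₀ hM (by norm_num)
  have hM2 : M ^ 2 ≤ M ^ 3 := pow_le_pow_right₀ hM (by norm_num)
  have hu1 : u ≤ 1 + u := by linarith
  have hk1 : u ≤ (1 + s) ^ 6 * (1 + u) ^ 7 := by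
    have := key 0 1 (by norm_num) (by norm_num)
    simp only [pow_zero, one_mul, pow_one] at this
    linarith
  have hk2 : W ^ 2 ≤ (1 + s) ^ 6 * (1 + u) ^ 7 := by
    refine le_trans (le_of_eq ?_) (key 4 4 (by norm_num) (by norm_num))
    rw [hW]; ring
  have hk3 : u ^ 2 * W ≤ (1 + s) ^ 6 * (1 + u) ^ 7 :=
    calc u ^ 2 * W ≤ (1 + u) ^ 2 * W := by gcongr
      _ = (1 + s) ^ 2 * (1 + u) ^ 4 := by rw [hW]; ring
      _ ≤ _ := key 2 4 (by norm_num) (by norm_num)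
  have hk4 : u * W ^ 3 ≤ (1 + s) ^ 6 * (1 + u) ^ 7 :=
    calc u * W ^ 3 ≤ (1 + u) * W ^ 3 := by gcongr
      _ = (1 + s) ^ 6 * (1 + u) ^ 7 := by rw [hW]; ring
  calc ‖thirdDerivFactor p (η * s ^ 3) x‖
      ≤ 24 * ‖p‖ * x + 3 * ‖w‖ ^ 2 + 18 * ‖p‖ * x ^ 2 * ‖w‖ + x * ‖w‖ ^ 3 := hsum
    _ ≤ 24 * (M * s ^ 3) * x + 3 * (3 * M * s * W) ^ 2
          + 18 * (M * s ^ 3) * x ^ 2 * (3 * M * s * W) + x * (3 * M * s * W) ^ 3 := by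
        gcongr
    _ = s ^ 2 * (24 * (M * u) + 27 * (M ^ 2 * W ^ 2) + 54 * (M ^ 2 * (u ^ 2 * W))
          + 27 * (M ^ 3 * (u * W ^ 3))) := by rw [hu]; ring
    _ ≤ s ^ 2 * (24 * (M ^ 3 * ((1 + s) ^ 6 * (1 + u) ^ 7))
          + 27 * (M ^ 3 * ((1 + s) ^ 6 * (1 + u) ^ 7))
          + 54 * (M ^ 3 * ((1 + s) ^ 6 * (1 + u) ^ 7))
          + 27 * (M ^ 3 * ((1 + s) ^ 6 * (1 + u) ^ 7))) := by
        gcongr s ^ 2 * (24 * ?_ + 27 * ?_ + 54 * ?_ + 27 * ?_)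
        · exact mul_le_mul hM1 hk1 hu0 (by positivity)
        · exact mul_le_mul hM2 hk2 (by positivity) (by positivity)
        · exact mul_le_mul hM2 hk3 (by positivity) (by positivity)
        · exact mul_le_mul_of_nonneg_left hk4 (by positivity)
    _ = 132 * M ^ 3 * s ^ 2 * (1 + s) ^ 6 * (1 + u) ^ 7 := by ring

lemma exists_integral_thirdDerivFactor_le {η : ℝ} (hη : 0 < η) :
    ∃ C : ℝ, 0 ≤ C ∧ ∀ (t : ℝ) (c a : ℂ), 0 < t → c.re = 0 → a.re = -η → ‖a‖ ≤ 1 + η →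
      ‖∫ x in Ioi (0 : ℝ), thirdDerivFactor (a * t) (η * t) x * cubicExp c (a * t) (η * t) x‖
        ≤ C * Real.exp (6 * η * t) := by
  obtain ⟨B, hB⟩ := exists_linear_le_cube 2 (half_pos hη)
  obtain ⟨D, hD⟩ := exists_linear_le_cube 1 hη
  set M := 1 + η
  set F : ℝ := ((Nat.factorial 7 : ℕ) : ℝ)
  have hF0 : 0 ≤ F := by positivity
  refine ⟨132 * M ^ 3 * (F * Real.exp (1 + D)) * (F * Real.exp (1 + B)), by positivity, ?_⟩
  intro t c a ht hc ha haM
  obtain ⟨s, hs, rfl⟩ : ∃ s : ℝ, 0 < s ∧ s ^ 3 = t :=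
    ⟨t ^ (1 / 3 : ℝ), by positivity, by
      rw [← Real.rpow_natCast, ← Real.rpow_mul ht.le]; norm_num⟩
  have hp : (a * (s ^ 3 : ℝ)).re = -(η * s ^ 3) := by
    rw [Complex.re_mul_ofReal, ha]; ring
  set K := 132 * M ^ 3 * (F * Real.exp (1 + D)) * (F * Real.exp (1 + B)) with hK
  have hint : IntegrableOn (fun x : ℝ => K * Real.exp (6 * η * s ^ 3) *
      (s * Real.exp (-s * x))) (Ioi 0) :=
    ((integrableOn_exp_mul_Ioi (a := -s) (by linarith) 0).const_mul s).const_mul _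
  have hval : ∫ x in Ioi (0 : ℝ), K * Real.exp (6 * η * s ^ 3) * (s * Real.exp (-s * x))
      = K * Real.exp (6 * η * s ^ 3) := by
    rw [integral_const_mul, integral_const_mul, integral_exp_mul_Ioi (by linarith)]
    have : s ≠ 0 := hs.ne'
    simp [this]
  rw [← hval]
  refine norm_integral_le_of_norm_le hint ?_
  filter_upwards [ae_restrict_mem measurableSet_Ioi] with x hx
  have hx : 0 ≤ x := le_of_lt hx
  have h1 := norm_thirdDerivFactor_le hη (M := M) (by linarith) (by linarith) haM hs hx
  rw [norm_mul, norm_cubicExp hc hp]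
  set u := s * x with hu
  have hu0 : 0 ≤ u := by positivity
  have hU : (1 + u) ^ 7 ≤ F * Real.exp (1 + u) := pow_le_factorial_mul_exp (by linarith) 7
  have hS : s * (1 + s) ^ 6 ≤ F * Real.exp (1 + s) :=
    calc s * (1 + s) ^ 6 ≤ (1 + s) * (1 + s) ^ 6 := by gcongr; linarith
      _ = (1 + s) ^ 7 := by ring
      _ ≤ _ := pow_le_factorial_mul_exp (by linarith) 7
  have hcub : η * s ^ 3 * x - η * s ^ 3 * x ^ 3 ≤ η * s ^ 3 - η / 2 * u ^ 3 := by
    have h : x - x ^ 3 ≤ 1 - x ^ 3 / 2 := by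
      nlinarith [mul_nonneg hx (sq_nonneg (x - 1)), sq_nonneg (x - 1), sq_nonneg (x - 1 / 2)]
    have : 0 ≤ η * s ^ 3 := by positivity
    have h2 := mul_le_mul_of_nonneg_left h this
    rw [hu]
    linarith
  calc ‖thirdDerivFactor (a * (s ^ 3 : ℝ)) (η * s ^ 3) x‖
        * Real.exp (η * s ^ 3 * x - η * s ^ 3 * x ^ 3)
      ≤ (132 * M ^ 3 * s ^ 2 * (1 + s) ^ 6 * (1 + u) ^ 7)
        * Real.exp (η * s ^ 3 - η / 2 * u ^ 3) := by gcongr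
    _ = 132 * M ^ 3 * s * (s * (1 + s) ^ 6) * (1 + u) ^ 7
        * Real.exp (η * s ^ 3 - η / 2 * u ^ 3) := by ring
    _ ≤ 132 * M ^ 3 * s * (F * Real.exp (1 + s)) * (F * Real.exp (1 + u))
        * Real.exp (η * s ^ 3 - η / 2 * u ^ 3) := by gcongr
    _ = 132 * M ^ 3 * s * F * F
        * Real.exp ((1 + s) + (1 + u) + (η * s ^ 3 - η / 2 * u ^ 3)) := by
        rw [Real.exp_add (1 + s + (1 + u)), Real.exp_add (1 + s)]; ring
    _ ≤ 132 * M ^ 3 * s * F * F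
        * Real.exp ((1 + D) + (1 + B) + 6 * η * s ^ 3 + -s * x) := by
        have h2 := hB u hu0
        have h3 := hD s hs.le
        have h4 : 0 ≤ η * s ^ 3 := by positivity
        refine mul_le_mul_of_nonneg_left (Real.exp_le_exp.2 ?_) (by positivity)
        linarith
    _ = K * Real.exp (6 * η * s ^ 3) * (s * Real.exp (-s * x)) := by
        rw [hK, Real.exp_add, Real.exp_add, Real.exp_add (1 + D)]; ring

lemma exists_integral_mul_cubicExp_sub_le {η : ℝ} (hη : 0 < η) :
    ∃ C : ℝ, 0 ≤ C ∧ ∀ (t : ℝ) (c a : ℂ), 0 < t → c.re = 0 → c ≠ 0 → a.re = -η →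
      ‖a‖ ≤ 1 + η →
      ‖(∫ x in Ioi (0 : ℝ), (x : ℂ) * cubicExp c (a * t) (η * t) x) - 1 / c ^ 2‖
        ≤ C * Real.exp (6 * η * t) / ‖c‖ ^ 3 := by
  obtain ⟨C, hC0, hC⟩ := exists_integral_thirdDerivFactor_le hη
  refine ⟨2 + C, by linarith, fun t c a ht hc hc0 ha haM => ?_⟩
  have hp : (a * t).re = -(η * t) := by rw [Complex.re_mul_ofReal, ha]; ring
  have hq : 0 < η * t := by positivity
  have h := hC t c a ht hc ha haM
  rw [integral_mul_cubicExp hq hc hc0 hp]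
  set J := ∫ x in Ioi (0 : ℝ), thirdDerivFactor (a * t) (η * t) x * cubicExp c (a * t) (η * t) x
  have e : 1 / c ^ 2 - 2 * ((η * t : ℝ) : ℂ) / c ^ 3 - J / c ^ 3 - 1 / c ^ 2
      = -(2 * ((η * t : ℝ) : ℂ) + J) / c ^ 3 := by ring
  rw [e, norm_div, norm_neg, norm_pow]
  gcongr
  have h1 : 6 * η * t + 1 ≤ Real.exp (6 * η * t) := Real.add_one_le_exp _
  have h2 : ‖2 * ((η * t : ℝ) : ℂ)‖ = 2 * (η * t) := by
    rw [norm_mul, Complex.norm_real, Real.norm_of_nonneg hq.le]; simp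
  linarith [norm_add_le (2 * ((η * t : ℝ) : ℂ)) J]

lemma norm_ostSymbol (η t ξ : ℝ) :
    ‖ostSymbol η t ξ‖ = Real.exp (η * t * |ξ| - η * t * |ξ| ^ 3) := by
  rw [ostSymbol, Complex.norm_exp, Complex.sub_re, Complex.ofReal_re, Complex.re_mul_ofReal,
    Complex.I_re]
  congr 1
  ring

lemma continuous_ostSymbol (η t : ℝ) : Continuous (ostSymbol η t) := by
  unfold ostSymbol
  fun_prop

lemma integrable_pow_mul_norm_ostSymbol {η t : ℝ} (hη : 0 < η) (ht : 0 < t) (n : ℕ) :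
    Integrable (fun ξ : ℝ => ‖ξ‖ ^ n * ‖ostSymbol η t ξ‖) := by
  have hpos : IntegrableOn (fun ξ : ℝ => ‖ξ‖ ^ n * ‖ostSymbol η t ξ‖) (Ioi 0) := by
    have hq : 0 < η * t := by positivity
    have hp : (-((η * t : ℝ) : ℂ)).re = -(η * t) := by simp
    have h := (integrableOn_pow_mul_cubicExp (c := 0) hq (by simp) hp n).norm
    refine h.congr ?_
    filter_upwards [ae_restrict_mem measurableSet_Ioi] with x hx
    rw [norm_mul, norm_pow, norm_cubicExp (by simp) hp, norm_ostSymbol, abs_of_pos hx,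
      Complex.norm_real]
  have hneg : IntegrableOn (fun ξ : ℝ => ‖ξ‖ ^ n * ‖ostSymbol η t ξ‖) (Iic 0) := by
    rw [integrableOn_Iic_iff_integrableOn_Iio]
    have h := IntegrableOn.comp_neg_Iio (c := (0 : ℝ))
      (f := fun ξ : ℝ => ‖ξ‖ ^ n * ‖ostSymbol η t ξ‖) (by simpa using hpos)
    simpa [norm_ostSymbol] using h
  rw [← integrableOn_univ, ← Iic_union_Ioi (a := (0 : ℝ))]
  exact hneg.union hpos

lemma ostKernel_eq_fourier (η t : ℝ) :
    (fun x : ℝ => ostKernel η t x) = FourierTransform.fourier (fun ξ : ℝ => ostSymbol η t (-ξ)) := by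
  ext x
  rw [Real.fourier_real_eq_integral_exp_smul, ostKernel, ← integral_neg_eq_self]
  congr 1
  ext ξ
  rw [smul_eq_mul]
  congr 2
  push_cast
  ring

lemma ostSymbol_kernel_eq_cubicExp (η t x ξ : ℝ) (hξ : 0 ≤ ξ) :
    Complex.exp (2 * Real.pi * Complex.I * x * ξ) * ostSymbol η t ξ =
      cubicExp (2 * Real.pi * Complex.I * x) ((Complex.I - η) * t) (η * t) ξ := by
  rw [ostSymbol, cubicExp, ← Complex.exp_add, abs_of_nonneg hξ]
  congr 1
  push_cast
  ring

lemma ostSymbol_neg_kernel_eq_cubicExp (η t x ξ : ℝ) (hξ : 0 ≤ ξ) :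
    Complex.exp (-(2 * Real.pi * Complex.I * x) * ξ) * ostSymbol η t (-ξ) =
      cubicExp (-(2 * Real.pi * Complex.I * x)) ((-Complex.I - η) * t) (η * t) ξ := by
  rw [ostSymbol, cubicExp, ← Complex.exp_add, abs_neg, abs_of_nonneg hξ]
  congr 1
  push_cast
  ring

lemma integrable_ostSymbol_neg {η t : ℝ} (hη : 0 < η) (ht : 0 < t) :
    Integrable (fun ξ : ℝ => ostSymbol η t (-ξ)) := by
  have h := integrable_pow_mul_norm_ostSymbol hη ht 0
  simp only [pow_zero, one_mul] at h
  exact ((integrable_norm_iff (continuous_ostSymbol η t).aestronglyMeasurable).1 h).comp_neg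

lemma integrable_smul_ostSymbol_neg {η t : ℝ} (hη : 0 < η) (ht : 0 < t) :
    Integrable (fun ξ : ℝ => ξ • ostSymbol η t (-ξ)) := by
  have h := integrable_pow_mul_norm_ostSymbol hη ht 1
  have hc := continuous_ostSymbol η t
  refine (integrable_norm_iff (Continuous.aestronglyMeasurable (by fun_prop))).1 ?_
  refine h.congr (ae_of_all _ fun ξ => ?_)
  simp [norm_ostSymbol]

lemma contDiff_ostKernel {η t : ℝ} (hη : 0 < η) (ht : 0 < t) :
    ContDiff ℝ 1 (fun x : ℝ => ostKernel η t x) := by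
  rw [ostKernel_eq_fourier]
  refine Real.contDiff_fourier (N := 1) fun n _ => ?_
  simpa [norm_ostSymbol] using integrable_pow_mul_norm_ostSymbol hη ht n

lemma deriv_ostKernel {η t : ℝ} (hη : 0 < η) (ht : 0 < t) (x : ℝ) :
    deriv (fun x : ℝ => ostKernel η t x) x = -(2 * Real.pi * Complex.I) *
      ((∫ ξ in Ioi (0 : ℝ), (ξ : ℂ) * cubicExp (-(2 * Real.pi * Complex.I * x))
          ((-Complex.I - η) * t) (η * t) ξ)
        - ∫ ξ in Ioi (0 : ℝ), (ξ : ℂ) * cubicExp (2 * Real.pi * Complex.I * x)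
          ((Complex.I - η) * t) (η * t) ξ) := by
  have hint := integrable_smul_ostSymbol_neg hη ht
  rw [ostKernel_eq_fourier, Real.deriv_fourier (integrable_ostSymbol_neg hη ht) hint,
    Real.fourier_real_eq_integral_exp_smul]
  set h : ℝ → ℂ := fun ξ =>
    Complex.exp (-(2 * Real.pi * Complex.I * x) * ξ) * (ξ * ostSymbol η t (-ξ)) with hh
  have hI : Integrable h := by
    refine hint.mono ?_ (ae_of_all _ fun ξ => ?_)
    · have hc := continuous_ostSymbol η t
      exact Continuous.aestronglyMeasurable (by fun_prop)
    · simp [hh, Complex.norm_exp]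
  have e : ∀ ξ : ℝ, Complex.exp (↑(-2 * Real.pi * ξ * x) * Complex.I) •
      ((-2 * Real.pi * Complex.I * ξ) • ostSymbol η t (-ξ))
        = -(2 * Real.pi * Complex.I) * h ξ := by
    intro ξ
    have e1 : (↑(-2 * Real.pi * ξ * x) * Complex.I : ℂ) = -(2 * Real.pi * Complex.I * x) * ξ := by
      push_cast
      ring
    rw [e1, hh, smul_eq_mul, smul_eq_mul]
    ring
  simp_rw [e]
  rw [integral_const_mul, ← intervalIntegral.integral_Iic_add_Ioi hI.integrableOn hI.integrableOn
    (b := 0), add_comm, sub_eq_add_neg, ← integral_neg]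
  congr 2
  · refine setIntegral_congr_fun measurableSet_Ioi fun ξ hξ => ?_
    simp only [hh]
    rw [← ostSymbol_neg_kernel_eq_cubicExp η t x ξ (le_of_lt hξ)]
    ring
  · have hn := integral_comp_neg_Ioi 0 h
    rw [neg_zero] at hn
    rw [← hn]
    refine setIntegral_congr_fun measurableSet_Ioi fun ξ hξ => ?_
    simp only [hh]
    rw [← ostSymbol_kernel_eq_cubicExp η t x ξ (le_of_lt hξ), neg_neg]
    push_cast
    rw [neg_mul_neg]
    ring

theorem stmt12 : ∀ η : ℝ, 0 < η → ∃ C > (0:ℝ), ∀ t : ℝ, 0 < t →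
    ContDiff ℝ 1 (fun x : ℝ => ostKernel η t x) ∧
    ∀ x : ℝ, x ≠ 0 →
      ‖deriv (fun x : ℝ => ostKernel η t x) x‖ ≤ C * Real.exp (6 * η * t) / |x| ^ 3 := by
  intro η hη
  obtain ⟨C, hC0, hC⟩ := exists_integral_mul_cubicExp_sub_le hη
  refine ⟨2 * C + 1, by linarith, fun t ht => ⟨contDiff_ostKernel hη ht, fun x hx => ?_⟩⟩
  rw [deriv_ostKernel hη ht]
  set c : ℂ := 2 * Real.pi * Complex.I * x with hc
  have hc0 : c ≠ 0 := by simp [hc, hx, Real.pi_ne_zero]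
  have hcre : c.re = 0 := by simp [hc]
  have hcn : ‖c‖ = 2 * Real.pi * |x| := by simp [hc, abs_of_pos Real.pi_pos]
  have hx0 : 0 < |x| := abs_pos.2 hx
  have h1 := hC t (-c) (-Complex.I - η) ht (by simp [hcre]) (neg_ne_zero.2 hc0) (by simp)
    ((norm_sub_le _ _).trans (by simp [abs_of_pos hη]))
  have h2 := hC t c (Complex.I - η) ht hcre hc0 (by simp)
    ((norm_sub_le _ _).trans (by simp [abs_of_pos hη]))
  rw [neg_sq, norm_neg] at h1
  set A := ∫ ξ in Ioi (0 : ℝ), (ξ : ℂ) * cubicExp (-c) ((-Complex.I - η) * t) (η * t) ξ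
  set B := ∫ ξ in Ioi (0 : ℝ), (ξ : ℂ) * cubicExp c ((Complex.I - η) * t) (η * t) ξ
  have hAB : ‖A - B‖ ≤ 2 * (C * Real.exp (6 * η * t) / ‖c‖ ^ 3) := by
    have e : A - B = (A - 1 / c ^ 2) - (B - 1 / c ^ 2) := by ring
    rw [e]
    linarith [norm_sub_le (A - 1 / c ^ 2) (B - 1 / c ^ 2)]
  have hn : ‖-(2 * Real.pi * Complex.I)‖ = 2 * Real.pi := by simp [abs_of_pos Real.pi_pos]
  have hπ : 1 ≤ (2 * Real.pi) ^ 2 := one_le_pow₀ (by linarith [Real.pi_gt_three])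
  calc ‖-(2 * Real.pi * Complex.I) * (A - B)‖
      ≤ 2 * Real.pi * (2 * (C * Real.exp (6 * η * t) / ‖c‖ ^ 3)) := by
        rw [norm_mul, hn]
        gcongr
    _ = 2 * C * Real.exp (6 * η * t) / |x| ^ 3 / (2 * Real.pi) ^ 2 := by
        rw [hcn]
        have := Real.pi_ne_zero
        field_simp
    _ ≤ 2 * C * Real.exp (6 * η * t) / |x| ^ 3 := div_le_self (by positivity) hπ
    _ ≤ (2 * C + 1) * Real.exp (6 * η * t) / |x| ^ 3 := by
        gcongr
        linarith
end

section
/- Let η > 0, t > 0 and K_η(t,·) be the OST kernel, and let u_0: ℝ → ℝ satisfy |u_0(x)| ≤ c/(1+|x|^{2+ε}) for some ε > 0. Then (K_η(t,·)∗u_0)(x) = K_η(t,x)·(∫_ℝ u_0(y) dy) + o(1/|x|²) as |x| → ∞, i.e. |x|²·|(K_η(t,·)∗u_0)(x) − K_η(t,x)∫_ℝ u_0(y) dy| → 0 as |x| → ∞. -/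
open MeasureTheory

section

open Filter Topology Set

lemma isBigO_pow_mul_cexp_cubic {a b : ℂ} (ha : a.re < 0) (k : ℕ) :
    (fun ξ : ℝ => (ξ : ℂ) ^ k * Complex.exp (a * (ξ : ℂ) ^ 3 + b * ξ)) =O[atTop]
      fun ξ : ℝ => Real.exp (-1 * ξ) := by
  refine Asymptotics.IsBigO.of_bound 1 ?_
  have h1 := (Real.isLittleO_pow_exp_atTop (n := k)).bound (c := 1) one_pos
  filter_upwards [h1, eventually_ge_atTop 1, eventually_ge_atTop ((|b.re| + 2) / (-a.re))]
    with ξ h1 h2 h3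
  have h4 : |b.re| + 2 ≤ -a.re * ξ := by
    rw [div_le_iff₀ (by linarith)] at h3; linarith
  have h0 : 0 ≤ ξ := by linarith
  have hre : (a * (ξ : ℂ) ^ 3 + b * ξ).re = a.re * ξ ^ 3 + b.re * ξ := by
    rw [← Complex.ofReal_pow, Complex.add_re, Complex.re_mul_ofReal, Complex.re_mul_ofReal]
  have h5 : |b.re| + 2 ≤ -a.re * ξ ^ 2 := by
    nlinarith [mul_nonneg (mul_nonneg (neg_nonneg.2 ha.le) h0) (sub_nonneg.2 h2)]
  have h6 : a.re * ξ ^ 3 + b.re * ξ ≤ -2 * ξ := by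
    nlinarith [mul_le_mul_of_nonneg_right h5 h0, mul_le_mul_of_nonneg_right (le_abs_self b.re) h0]
  rw [norm_mul, Complex.norm_exp, hre, norm_pow, Complex.norm_real, one_mul,
    Real.norm_eq_abs (Real.exp _), Real.abs_exp, ← norm_pow]
  calc ‖ξ ^ k‖ * Real.exp (a.re * ξ ^ 3 + b.re * ξ)
      ≤ Real.exp ξ * Real.exp (-2 * ξ) := by
        gcongr
        simpa using h1
    _ = Real.exp (-1 * ξ) := by rw [← Real.exp_add]; ring_nf

lemma integrableOn_cexp_mul_pow_mul_cexp_cubic {a b w : ℂ} (ha : a.re < 0) (hw : w.re = 0)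
    (k : ℕ) :
    IntegrableOn (fun ξ : ℝ => Complex.exp (w * ξ) *
      ((ξ : ℂ) ^ k * Complex.exp (a * (ξ : ℂ) ^ 3 + b * ξ))) (Ioi 0) := by
  have hcont : Continuous (fun ξ : ℝ => Complex.exp (w * ξ) *
      ((ξ : ℂ) ^ k * Complex.exp (a * (ξ : ℂ) ^ 3 + b * ξ))) := by fun_prop
  refine (integrable_norm_iff hcont.aestronglyMeasurable).1 ?_
  refine integrable_of_isBigO_exp_neg one_pos hcont.norm.continuousOn ?_
  refine Asymptotics.IsBigO.norm_left ?_
  refine (Asymptotics.IsBigO.of_norm_eventuallyLE (Eventually.of_forall fun ξ => ?_)).trans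
    (isBigO_pow_mul_cexp_cubic (b := b) ha k).norm_left
  simp [Complex.norm_exp, hw]

lemma sq_mul_integral_Ioi_cexp_mul_cexp_cubic {a b w : ℂ} (ha : a.re < 0) (hw : w.re = 0) :
    w ^ 2 * ∫ ξ in Ioi (0 : ℝ), Complex.exp (w * ξ) * Complex.exp (a * (ξ : ℂ) ^ 3 + b * ξ) =
      b - w + ∫ ξ in Ioi (0 : ℝ), Complex.exp (w * ξ) *
        (((3 * a * (ξ : ℂ) ^ 2 + b) ^ 2 + 6 * a * ξ) *
          Complex.exp (a * (ξ : ℂ) ^ 3 + b * ξ)) := by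
  have hI (k : ℕ) := integrableOn_cexp_mul_pow_mul_cexp_cubic (b := b) ha hw k
  have hI0 : IntegrableOn (fun ξ : ℝ => Complex.exp (w * ξ) *
      Complex.exp (a * (ξ : ℂ) ^ 3 + b * ξ)) (Ioi 0) := by simpa using hI 0
  have hI2 : IntegrableOn (fun ξ : ℝ => Complex.exp (w * ξ) *
        (((3 * a * (ξ : ℂ) ^ 2 + b) ^ 2 + 6 * a * ξ) *
          Complex.exp (a * (ξ : ℂ) ^ 3 + b * ξ))) (Ioi 0) := by
    have := ((((hI 4).const_mul (9 * a ^ 2)).add ((hI 2).const_mul (6 * a * b))).add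
      ((hI 0).const_mul (b ^ 2))).add ((hI 1).const_mul (6 * a))
    refine this.congr (Eventually.of_forall fun ξ => ?_)
    simp only [Pi.add_apply]
    ring
  have hderiv : ∀ ξ : ℝ, HasDerivAt (fun ξ : ℝ => Complex.exp (w * ξ) *
      ((w - (3 * a * (ξ : ℂ) ^ 2 + b)) * Complex.exp (a * (ξ : ℂ) ^ 3 + b * ξ)))
      (w ^ 2 * (Complex.exp (w * ξ) * Complex.exp (a * (ξ : ℂ) ^ 3 + b * ξ)) -
        Complex.exp (w * ξ) * (((3 * a * (ξ : ℂ) ^ 2 + b) ^ 2 + 6 * a * ξ) *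
          Complex.exp (a * (ξ : ℂ) ^ 3 + b * ξ))) ξ := by
    intro ξ
    have hid : HasDerivAt (fun ξ : ℝ => (ξ : ℂ)) 1 ξ := Complex.ofRealCLM.hasDerivAt
    have h1 := (hid.const_mul w).cexp
    have h2 := (((hid.pow 3).const_mul a).add (hid.const_mul b)).cexp
    have h3 := (((hid.pow 2).const_mul (3 * a)).add_const b).const_sub w
    refine (h1.mul (h3.mul h2)).congr_deriv ?_
    simp only [Pi.add_apply, Pi.mul_apply, Pi.pow_apply]
    push_cast
    ring
  have hlim : Tendsto (fun ξ : ℝ => Complex.exp (w * ξ) *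
      ((w - (3 * a * (ξ : ℂ) ^ 2 + b)) * Complex.exp (a * (ξ : ℂ) ^ 3 + b * ξ))) atTop (𝓝 0) := by
    have hz : Tendsto (fun ξ : ℝ => Real.exp (-1 * ξ)) atTop (𝓝 0) := by
      simpa using Real.tendsto_exp_neg_atTop_nhds_zero
    have h1 (k : ℕ) := (isBigO_pow_mul_cexp_cubic (b := b) ha k).trans_tendsto hz
    have h2 := (((h1 0).const_mul (w - b)).sub ((h1 2).const_mul (3 * a))).norm
    rw [tendsto_zero_iff_norm_tendsto_zero]
    simp only [mul_zero, sub_zero, norm_zero] at h2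
    refine h2.congr fun ξ => ?_
    rw [norm_mul (Complex.exp (w * ξ)), Complex.norm_exp, Complex.re_mul_ofReal, hw, zero_mul,
      Real.exp_zero, one_mul]
    congr 1
    ring
  have := integral_Ioi_of_hasDerivAt_of_tendsto' (a := 0) (fun ξ _ => hderiv ξ)
    ((hI0.const_mul (w ^ 2)).sub hI2) hlim
  rw [integral_sub (hI0.const_mul (w ^ 2)) hI2, integral_const_mul] at this
  rw [sub_eq_iff_eq_add] at this
  rw [this]
  simp

lemma tendsto_integral_Ioi_cexp_mul (G : ℝ → ℂ) :
    Tendsto (fun x : ℝ => ∫ ξ in Ioi (0 : ℝ), Complex.exp (2 * Real.pi * Complex.I * x * ξ) * G ξ)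
      (cocompact ℝ) (𝓝 0) := by
  have h := (Real.tendsto_integral_exp_smul_cocompact ((Ioi (0 : ℝ)).indicator G)).comp
    (Homeomorph.neg ℝ).isClosedEmbedding.tendsto_cocompact
  refine h.congr fun x => ?_
  rw [← integral_indicator measurableSet_Ioi]
  refine integral_congr_ae (Eventually.of_forall fun ξ => ?_)
  by_cases hξ : ξ ∈ Ioi (0 : ℝ)
  · simp only [indicator_of_mem hξ, Circle.smul_def, Real.fourierChar_apply,
      smul_eq_mul]
    congr 2
    simp
    ring
  · simp [indicator_of_notMem hξ]

lemma ostSymbol_of_nonneg (η t : ℝ) {ξ : ℝ} (hξ : 0 ≤ ξ) :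
    ostSymbol η t ξ =
      Complex.exp (((Complex.I - η) * t) * (ξ : ℂ) ^ 3 + (η * t : ℂ) * ξ) := by
  rw [ostSymbol, abs_of_nonneg hξ]
  congr 1
  push_cast
  ring

lemma ostSymbol_neg_of_nonneg (η t : ℝ) {ξ : ℝ} (hξ : 0 ≤ ξ) :
    ostSymbol η t (-ξ) =
      Complex.exp (((-Complex.I - η) * t) * (ξ : ℂ) ^ 3 + (η * t : ℂ) * ξ) := by
  rw [ostSymbol, abs_neg, abs_of_nonneg hξ]
  congr 1
  push_cast
  ring

lemma integrable_ostSymbol {η t : ℝ} (hη : 0 < η) (ht : 0 < t) : Integrable (ostSymbol η t) := by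
  have hp := integrableOn_cexp_mul_pow_mul_cexp_cubic (a := (Complex.I - η) * t)
    (b := (η * t : ℂ)) (w := 0) (by simpa using by positivity) rfl 0
  have hn := integrableOn_cexp_mul_pow_mul_cexp_cubic (a := (-Complex.I - η) * t)
    (b := (η * t : ℂ)) (w := 0) (by simpa using by positivity) rfl 0
  simp only [zero_mul, Complex.exp_zero, pow_zero, one_mul] at hp hn
  have hp' : IntegrableOn (ostSymbol η t) (Ioi 0) :=
    hp.congr_fun (fun ξ hξ => (ostSymbol_of_nonneg η t (le_of_lt hξ)).symm) measurableSet_Ioi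
  have hn' : IntegrableOn (fun ξ => ostSymbol η t (-ξ)) (Ioi 0) :=
    hn.congr_fun (fun ξ hξ => (ostSymbol_neg_of_nonneg η t (le_of_lt hξ)).symm) measurableSet_Ioi
  have hneg : IntegrableOn (ostSymbol η t) (Iio 0) := by
    have h := hn'
    rw [← neg_zero] at h
    simpa using h.comp_neg_Iio
  rw [← integrableOn_univ, ← Iic_union_Ioi (a := (0 : ℝ))]
  exact ((integrableOn_Iic_iff_integrableOn_Iio).2 hneg).union hp'

lemma norm_cexp_two_pi_I_mul (y : ℝ) :
    ‖Complex.exp (2 * Real.pi * Complex.I * (y : ℂ))‖ = 1 := by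
  simp [Complex.norm_exp]

lemma integrable_ostKernel_integrand {η t : ℝ} (hη : 0 < η) (ht : 0 < t) (x : ℝ) :
    Integrable (fun ξ : ℝ =>
      Complex.exp (2 * Real.pi * Complex.I * ((x * ξ : ℝ) : ℂ)) * ostSymbol η t ξ) :=
  (integrable_ostSymbol hη ht).mono
    (Continuous.aestronglyMeasurable (by have := continuous_ostSymbol η t; fun_prop))
    (Eventually.of_forall fun ξ => by rw [norm_mul, norm_cexp_two_pi_I_mul, one_mul])

lemma continuous_ostKernel {η t : ℝ} (hη : 0 < η) (ht : 0 < t) : Continuous (ostKernel η t) := by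
  refine continuous_of_dominated (bound := fun ξ => ‖ostSymbol η t ξ‖)
    (fun x => (integrable_ostKernel_integrand hη ht x).1)
    (fun x => Eventually.of_forall fun ξ => ?_) (integrable_ostSymbol hη ht).norm
    (Eventually.of_forall fun ξ => ?_)
  · rw [norm_mul, norm_cexp_two_pi_I_mul, one_mul]
  · fun_prop

lemma ostKernel_eq_integral_Ioi_add {η t : ℝ} (hη : 0 < η) (ht : 0 < t) (x : ℝ) :
    ostKernel η t x =
      (∫ ξ in Ioi (0 : ℝ), Complex.exp (-(2 * Real.pi * Complex.I * x) * ξ) *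
        Complex.exp (((-Complex.I - η) * t) * (ξ : ℂ) ^ 3 + (η * t : ℂ) * ξ)) +
      ∫ ξ in Ioi (0 : ℝ), Complex.exp (2 * Real.pi * Complex.I * x * ξ) *
        Complex.exp (((Complex.I - η) * t) * (ξ : ℂ) ^ 3 + (η * t : ℂ) * ξ) := by
  have hI := integrable_ostKernel_integrand hη ht x
  rw [ostKernel, ← intervalIntegral.integral_Iic_add_Ioi (b := 0) hI.integrableOn hI.integrableOn]
  congr 1
  · have h := integral_comp_neg_Ioi 0 (fun ξ : ℝ =>
      Complex.exp (2 * Real.pi * Complex.I * ((x * ξ : ℝ) : ℂ)) * ostSymbol η t ξ)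
    rw [neg_zero] at h
    rw [← h]
    refine setIntegral_congr_fun measurableSet_Ioi fun ξ hξ => ?_
    simp only [ostSymbol_neg_of_nonneg η t (le_of_lt hξ)]
    push_cast
    ring_nf
  · refine setIntegral_congr_fun measurableSet_Ioi fun ξ hξ => ?_
    simp only [ostSymbol_of_nonneg η t (le_of_lt hξ)]
    push_cast
    ring_nf

lemma tendsto_sq_mul_ostKernel {η t : ℝ} (hη : 0 < η) (ht : 0 < t) :
    Tendsto (fun x : ℝ => (x : ℂ) ^ 2 * ostKernel η t x) (cocompact ℝ)
      (𝓝 (2 * (η * t) / (2 * Real.pi * Complex.I) ^ 2)) := by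
  set G : ℂ → ℝ → ℂ := fun a ξ => ((3 * a * (ξ : ℂ) ^ 2 + η * t) ^ 2 + 6 * a * ξ) *
    Complex.exp (a * (ξ : ℂ) ^ 3 + η * t * ξ) with hG
  have hp := tendsto_integral_Ioi_cexp_mul (G ((Complex.I - η) * t))
  have hn := (tendsto_integral_Ioi_cexp_mul (G ((-Complex.I - η) * t))).comp
    (Homeomorph.neg ℝ).isClosedEmbedding.tendsto_cocompact
  have hs := ((hp.add hn).const_add (2 * (η * t : ℂ))).div_const ((2 * Real.pi * Complex.I) ^ 2)
  simp only [add_zero] at hs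
  refine hs.congr fun x => ?_
  have hpi : (2 * Real.pi * Complex.I) ≠ 0 := Complex.two_pi_I_ne_zero
  have e1 := sq_mul_integral_Ioi_cexp_mul_cexp_cubic (a := (Complex.I - η) * t) (b := η * t)
    (w := 2 * Real.pi * Complex.I * x) (by simpa using by positivity) (by simp)
  have e2 := sq_mul_integral_Ioi_cexp_mul_cexp_cubic (a := (-Complex.I - η) * t) (b := η * t)
    (w := -(2 * Real.pi * Complex.I * x)) (by simpa using by positivity) (by simp)
  rw [div_eq_iff (pow_ne_zero 2 hpi), ostKernel_eq_integral_Ioi_add hη ht]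
  simp only [hG, Function.comp, Homeomorph.coe_neg, Complex.ofReal_neg, mul_neg]
  simp only [neg_sq] at e2
  linear_combination -e1 - e2

instance : (cocompact ℝ).IsCountablyGenerated := by
  rw [cocompact_eq_atBot_atTop]; infer_instance

lemma Continuous.exists_norm_le_of_tendsto_cocompact {X E : Type*} [TopologicalSpace X]
    [NormedAddCommGroup E] {f : X → E} (hf : Continuous f) {L : E}
    (hL : Tendsto f (cocompact X) (𝓝 L)) : ∃ C, ∀ x, ‖f x‖ ≤ C := by
  have h := hL.norm.eventually_lt_const (lt_add_one ‖L‖)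
  obtain ⟨S, hS, hSc⟩ := mem_cocompact.1 h
  obtain ⟨C, hC⟩ := hS.exists_bound_of_continuousOn hf.continuousOn
  refine ⟨max C (‖L‖ + 1), fun x => ?_⟩
  by_cases hx : x ∈ S
  · exact (hC x hx).trans (le_max_left _ _)
  · exact (le_of_lt (hSc hx)).trans (le_max_right _ _)

lemma integrable_of_abs_le_div_one_add_rpow {ε c : ℝ} (hε : 0 < ε) {u : ℝ → ℝ}
    (hu : Measurable u) (hdecay : ∀ x, |u x| ≤ c / (1 + |x| ^ (2 + ε))) : Integrable u := by
  have hc : 0 ≤ c := by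
    have := (abs_nonneg _).trans (hdecay 0)
    rwa [abs_zero, Real.zero_rpow (by linarith), add_zero, div_one] at this
  refine (integrable_inv_one_add_sq.const_mul (2 * c)).mono' hu.aestronglyMeasurable
    (Eventually.of_forall fun x => (hdecay x).trans ?_)
  rw [← div_eq_mul_inv, div_le_div_iff₀ (by positivity) (by positivity)]
  have hr : 0 ≤ |x| ^ (2 + ε) := by positivity
  have key : x ^ 2 ≤ 1 + |x| ^ (2 + ε) := by
    rw [← sq_abs]
    rcases le_total |x| 1 with h | h
    · nlinarith [abs_nonneg x]
    · have := Real.rpow_le_rpow_of_exponent_le h (by linarith : (2 : ℝ) ≤ 2 + ε)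
      rw [Real.rpow_two] at this
      linarith
  nlinarith

theorem tendsto_sq_mul_norm_convolution_sub {K : ℝ → ℂ} (hK : Continuous K) {L : ℂ}
    (hL : Tendsto (fun x : ℝ => (x : ℂ) ^ 2 * K x) (cocompact ℝ) (𝓝 L)) {ε c : ℝ} (hε : 0 < ε)
    {u : ℝ → ℝ} (hu : Measurable u) (hdecay : ∀ x, |u x| ≤ c / (1 + |x| ^ (2 + ε))) :
    Tendsto (fun x : ℝ => |x| ^ 2 *
        ‖(∫ y : ℝ, K (x - y) * (u y : ℂ)) - K x * ((∫ y : ℝ, u y : ℝ) : ℂ)‖)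
      (cocompact ℝ) (𝓝 0) := by
  have hc : 0 ≤ c := by
    have := (abs_nonneg _).trans (hdecay 0)
    rwa [abs_zero, Real.zero_rpow (by linarith), add_zero, div_one] at this
  have hui := integrable_of_abs_le_div_one_add_rpow hε hu hdecay
  have huc : Integrable (fun y => (u y : ℂ)) := hui.ofReal
  have habs : Tendsto (fun x : ℝ => |x|) (cocompact ℝ) atTop := tendsto_norm_cocompact_atTop
  have hne : ∀ᶠ x : ℝ in cocompact ℝ, x ≠ 0 :=
    (isCompact_singleton (x := (0 : ℝ))).compl_mem_cocompact
  have hK0 : Tendsto K (cocompact ℝ) (𝓝 0) := by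
    have h1 : Tendsto (fun x : ℝ => ((x ^ 2 : ℝ) : ℂ)⁻¹) (cocompact ℝ) (𝓝 0) := by
      have h2 := ((tendsto_pow_atTop two_ne_zero).comp habs).inv_tendsto_atTop
      have h3 := (Complex.continuous_ofReal.tendsto 0).comp h2
      rw [Complex.ofReal_zero] at h3
      exact h3.congr fun x => by simp
    have := h1.mul hL
    rw [zero_mul] at this
    refine this.congr' ?_
    filter_upwards [hne] with x hx
    have : (x : ℂ) ≠ 0 := by exact_mod_cast hx
    push_cast
    field_simp
  obtain ⟨B, hB⟩ := hK.exists_norm_le_of_tendsto_cocompact hK0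
  obtain ⟨C, hC⟩ := Continuous.exists_norm_le_of_tendsto_cocompact (by fun_prop) hL
  have hC' (x : ℝ) : x ^ 2 * ‖K x‖ ≤ C := by simpa using hC x
  have hKi : Integrable K := by
    refine (integrable_inv_one_add_sq.const_mul (B + C)).mono' hK.aestronglyMeasurable
      (Eventually.of_forall fun x => ?_)
    rw [← div_eq_mul_inv, le_div_iff₀ (by positivity)]
    linarith [hB x, hC' x]
  have hms (x : ℝ) : MeasurableSet {y : ℝ | |y| ≤ |x| / 2} :=
    measurableSet_le (by fun_prop) (by fun_prop)
  -- The part of the difference with `|y| ≤ |x| / 2` in the convolution.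
  set D : ℝ → ℝ → ℂ := fun x y =>
    (x : ℂ) ^ 2 * ({y : ℝ | |y| ≤ |x| / 2}.indicator (fun y => K (x - y)) y - K x) * u y with hD
  set T : ℝ → ℝ → ℂ := fun x y =>
    (x : ℂ) ^ 2 * ({y : ℝ | |y| ≤ |x| / 2}ᶜ.indicator (fun y => K (x - y)) y) * u y with hT
  have hKm (x : ℝ) : Measurable fun y => K (x - y) := (hK.comp (by fun_prop)).measurable
  have hDm (x : ℝ) : AEStronglyMeasurable (D x) volume := by
    have := (hKm x).indicator (hms x)
    exact Measurable.aestronglyMeasurable (by fun_prop)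
  have hTm (x : ℝ) : AEStronglyMeasurable (T x) volume := by
    have := (hKm x).indicator (hms x).compl
    exact Measurable.aestronglyMeasurable (by fun_prop)
  have hDb (x y : ℝ) : ‖D x y‖ ≤ 5 * C * |u y| := by
    have hx0 : x ^ 2 * ‖{y : ℝ | |y| ≤ |x| / 2}.indicator (fun y => K (x - y)) y‖ ≤ 4 * C := by
      by_cases hy : y ∈ {y : ℝ | |y| ≤ |x| / 2}
      · rw [indicator_of_mem hy]
        have h1 : |x| / 2 ≤ |x - y| := by
          have := abs_sub_abs_le_abs_sub x y
          have : |y| ≤ |x| / 2 := hy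
          linarith
        have h2 : x ^ 2 ≤ 4 * (x - y) ^ 2 := by
          rw [← sq_abs x, ← sq_abs (x - y)]
          nlinarith [abs_nonneg x]
        calc x ^ 2 * ‖K (x - y)‖ ≤ 4 * (x - y) ^ 2 * ‖K (x - y)‖ := by gcongr
          _ ≤ 4 * C := by linarith [hC' (x - y)]
      · rw [indicator_of_notMem hy, norm_zero, mul_zero]
        linarith [(norm_nonneg _).trans (hC 0)]
    rw [hD]
    simp only [norm_mul, norm_pow, Complex.norm_real, Real.norm_eq_abs, sq_abs]
    refine mul_le_mul_of_nonneg_right ?_ (abs_nonneg _)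
    calc _ ≤ x ^ 2 * (‖{y : ℝ | |y| ≤ |x| / 2}.indicator (fun y => K (x - y)) y‖ + ‖K x‖) := by
          gcongr; exact norm_sub_le _ _
      _ ≤ 5 * C := by linarith [hC' x]
  have hTb : ∀ x : ℝ, x ≠ 0 → ∀ y : ℝ,
      ‖T x y‖ ≤ c * 2 ^ (2 + ε) * |x| ^ (-ε) * ‖K (x - y)‖ := by
    intro x hx y
    have hxp : 0 < |x| := abs_pos.2 hx
    by_cases hy : y ∈ {y : ℝ | |y| ≤ |x| / 2}ᶜ
    · have hy' : |x| / 2 < |y| := by simpa using hy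
      have h1 : |u y| ≤ c / (|x| / 2) ^ (2 + ε) := by
        refine (hdecay y).trans ?_
        have : (|x| / 2) ^ (2 + ε) ≤ |y| ^ (2 + ε) :=
          Real.rpow_le_rpow (by positivity) hy'.le (by linarith)
        gcongr
        linarith
      have h2 : |x| ^ 2 * (c / (|x| / 2) ^ (2 + ε)) = c * 2 ^ (2 + ε) * |x| ^ (-ε) := by
        rw [Real.div_rpow hxp.le zero_le_two, Real.rpow_add hxp, Real.rpow_two,
          Real.rpow_neg hxp.le]
        field_simp
      simp only [hT, indicator_of_mem hy, norm_mul, norm_pow, Complex.norm_real, Real.norm_eq_abs]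
      calc |x| ^ 2 * ‖K (x - y)‖ * |u y|
          ≤ |x| ^ 2 * ‖K (x - y)‖ * (c / (|x| / 2) ^ (2 + ε)) := by gcongr
        _ = |x| ^ 2 * (c / (|x| / 2) ^ (2 + ε)) * ‖K (x - y)‖ := by ring
        _ = _ := by rw [h2]
    · simp only [hT, indicator_of_notMem hy, mul_zero, zero_mul, norm_zero]
      positivity
  have hDi (x : ℝ) : Integrable (D x) :=
    (hui.abs.const_mul (5 * C)).mono' (hDm x) (Eventually.of_forall (hDb x))
  have hKxi (x : ℝ) : Integrable fun y => K (x - y) := hKi.comp_sub_left x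
  have hTi : ∀ x : ℝ, x ≠ 0 → Integrable (T x) := fun x hx =>
    ((hKxi x).norm.const_mul _).mono' (hTm x) (Eventually.of_forall (hTb x hx))
  have hD0 : Tendsto (fun x => ∫ y, D x y) (cocompact ℝ) (𝓝 0) := by
    have := tendsto_integral_filter_of_dominated_convergence (l := cocompact ℝ) (F := D)
      (f := fun _ => (0 : ℂ)) (fun y => 5 * C * |u y|) (Eventually.of_forall hDm)
      (Eventually.of_forall fun x => Eventually.of_forall (hDb x)) (hui.abs.const_mul (5 * C))
      (Eventually.of_forall fun y => ?_)
    · simpa using this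
    have hsub : Tendsto (fun x : ℝ => x - y) (cocompact ℝ) (cocompact ℝ) :=
      (Homeomorph.subRight y).isClosedEmbedding.tendsto_cocompact
    have hinv : Tendsto (fun x : ℝ => ((x - y : ℝ) : ℂ)⁻¹) (cocompact ℝ) (𝓝 0) :=
      (tendsto_inv₀_cobounded.comp (by
        refine tendsto_norm_atTop_iff_cobounded.1 ?_
        simp only [Complex.norm_real]
        exact tendsto_norm_cocompact_atTop.comp hsub))
    have hratio : Tendsto (fun x : ℝ => (1 + (y : ℂ) * ((x - y : ℝ) : ℂ)⁻¹) ^ 2) (cocompact ℝ)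
        (𝓝 1) := by
      simpa using ((hinv.const_mul (y : ℂ)).const_add 1).pow 2
    have hlim := (((hratio.mul (hL.comp hsub)).sub hL).mul_const (u y : ℂ))
    rw [one_mul, sub_self, zero_mul] at hlim
    refine hlim.congr' ?_
    filter_upwards [habs.eventually_ge_atTop (2 * |y|), hsub.eventually hne] with x hx hxy
    have hy : y ∈ {y : ℝ | |y| ≤ |x| / 2} := by
      rw [mem_ofPred_eq]; linarith
    have hxy' : (x : ℂ) - y ≠ 0 := by exact_mod_cast hxy
    simp only [hD, indicator_of_mem hy, Function.comp]
    push_cast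
    field_simp
    ring
  have hT0 : Tendsto (fun x => ∫ y, T x y) (cocompact ℝ) (𝓝 0) := by
    have hlim : Tendsto (fun x : ℝ => c * 2 ^ (2 + ε) * |x| ^ (-ε) * ∫ y, ‖K y‖)
        (cocompact ℝ) (𝓝 0) := by
      simpa using (((tendsto_rpow_neg_atTop hε).comp habs).const_mul (c * 2 ^ (2 + ε))).mul_const
        (∫ y, ‖K y‖)
    refine squeeze_zero_norm' ?_ hlim
    filter_upwards [hne] with x hx
    refine (norm_integral_le_of_norm_le ((hKxi x).norm.const_mul _)
      (Eventually.of_forall (hTb x hx))).trans_eq ?_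
    rw [integral_const_mul, integral_sub_left_eq_self (fun y => ‖K y‖)]
  have hsum := (hD0.add hT0).norm
  rw [add_zero, norm_zero] at hsum
  refine hsum.congr' ?_
  filter_upwards [hne] with x hx
  have hKu : Integrable fun y => K (x - y) * (u y : ℂ) :=
    huc.bdd_mul (hKm x).aestronglyMeasurable (Eventually.of_forall fun y => hB (x - y))
  rw [← integral_add (hDi x) (hTi x hx), ← integral_complex_ofReal, ← integral_const_mul,
    ← integral_sub hKu (huc.const_mul _), ← Real.norm_eq_abs, ← Complex.norm_real, ← norm_pow,
    ← norm_mul, ← integral_const_mul]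
  congr 2
  ext y
  have := congrFun (indicator_self_add_compl {y : ℝ | |y| ≤ |x| / 2} (fun y => K (x - y))) y
  simp only [Pi.add_apply] at this
  simp only [hD, hT]
  rw [← this]
  ring

end

theorem stmt18 (η t ε c : ℝ) (hη : 0 < η) (ht : 0 < t) (hε : 0 < ε) (hc : 0 < c)
    (u0 : ℝ → ℝ) (hm : Measurable u0)
    (hdecay : ∀ x : ℝ, |u0 x| ≤ c / (1 + |x| ^ (2 + ε))) :
    Filter.Tendsto
      (fun x : ℝ => |x| ^ 2 *
        ‖(∫ y : ℝ, ostKernel η t (x - y) * (u0 y : ℂ)) -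
          ostKernel η t x * ((∫ y : ℝ, u0 y : ℝ) : ℂ)‖)
      (Filter.cocompact ℝ) (nhds 0) := by
  exact tendsto_sq_mul_norm_convolution_sub (continuous_ostKernel hη ht)
    (tendsto_sq_mul_ostKernel hη ht) hε hm hdecay
end
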